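/- arXiv:1209.3239 — 3 statements merged into one kernel-verified Lean document; each statement's English description precedes it below -/
import Mathlib

section
/- Let J be a finite-dimensional Jordan algebra over a field k of characteristic ≠ 2, let e ∈ J be an idempotent, and let N be a nilpotent ideal of J with N = N_0 ⊕ N_{1/2} ⊕ N_1 where N_i = N ∩ J_i(e) and dim_k N_0 = dim_k N_{1/2} = dim_k N_1 = 1. Then N^⟨3⟩ = (N·N)·N = 0; in particular the nilpotency type of N cannot be (1,1,1). -/
variable {k : Type*} [Field k] {J : Type*} [NonUnitalNonAssocCommRing J]
  [Module k J] [SMulCommClass k J J] [IsScalarTower k J J]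

/-- The Peirce component `J_c(e) = {x ∈ J : e·x = c·x}`, a `k`-subspace of `J`. -/
def peirceComp (e : J) (c : k) : Submodule k J where
  carrier := {x : J | e * x = c • x}
  add_mem' := by
    intro a b ha hb
    simp only [Set.mem_setOf_eq] at *
    rw [mul_add, ha, hb, smul_add]
  zero_mem' := by simp
  smul_mem' := by
    intro r x hx
    simp only [Set.mem_setOf_eq] at *
    rw [mul_smul_comm, hx, smul_comm]

/-- For subspaces `A, B ⊆ J`, `A·B` is the `k`-subspace spanned by all products `a·b`
with `a ∈ A`, `b ∈ B`. -/
def submoduleMul (A B : Submodule k J) : Submodule k J :=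
  Submodule.span k {z : J | ∃ a ∈ A, ∃ b ∈ B, z = a * b}

/-- The descending series of a subspace `N`: `nseries N 0 = N^⟨1⟩ = N` and
`nseries N m = N^⟨m+1⟩ = N^⟨m⟩·N`. -/
def nseries (N : Submodule k J) : ℕ → Submodule k J
  | 0 => N
  | m + 1 => submoduleMul (nseries N m) N

/-!
Linearizing the Jordan identity at an idempotent `e` gives `2 [L_e, L_{ex}] = [L_e, L_x]`. So, for
`c ≠ 1/2`, multiplication by an element of `J_c(e)` commutes with `L_e` and preserves every
`J_d(e)`. On a line `N_d` it therefore acts as a scalar, which is zero by nilpotency. Hence `N_0`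
and `N_1` annihilate `N`. With `N_{1/2} = k h`, the square `N·N` is spanned by `h²`, while
`h² ∈ s h + N_0 + N_1` gives `h² h = s h²`, which vanishes by nilpotency again.
-/

section SubmoduleMul

omit [SMulCommClass k J J] [IsScalarTower k J J]

theorem submoduleMul_le {A B C : Submodule k J} :
    submoduleMul A B ≤ C ↔ ∀ a ∈ A, ∀ b ∈ B, a * b ∈ C := by
  refine Submodule.span_le.trans ⟨fun h a ha b hb => h ⟨a, ha, b, hb, rfl⟩, ?_⟩
  rintro h _ ⟨a, ha, b, hb, rfl⟩
  exact h a ha b hb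

theorem mul_mem_submoduleMul {A B : Submodule k J} {a b : J} (ha : a ∈ A) (hb : b ∈ B) :
    a * b ∈ submoduleMul A B :=
  submoduleMul_le.1 le_rfl a ha b hb

theorem mul_eq_zero_of_mul_eq_smul_of_nilpotent {N : Submodule k J}
    (hnilp : ∃ m, nseries N m = ⊥) {v w : J} (hv : v ∈ N) (hw : w ∈ N) {c : k}
    (hvw : v * w = c • v) : v * w = 0 := by
  rcases eq_or_ne c 0 with rfl | hc
  · rw [hvw, zero_smul]
  have v_mem_nseries : ∀ n, v ∈ nseries N n := by
    intro n
    induction n with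
    | zero => exact hv
    | succ n ih =>
      have : c • v ∈ nseries N (n + 1) := hvw ▸ mul_mem_submoduleMul ih hw
      exact (Submodule.smul_mem_iff _ hc).1 this
  obtain ⟨m, hm⟩ := hnilp
  have v_eq_zero : v = 0 := (Submodule.mem_bot k).1 (hm ▸ v_mem_nseries m)
  rw [v_eq_zero, zero_mul]

end SubmoduleMul

omit [SMulCommClass k J J] in
theorem submoduleMul_submoduleMul_eq_bot_of_sup_eq {N : Submodule k J}
    (hmul : submoduleMul N N ≤ N) (hnilp : ∃ m, nseries N m = ⊥) {Z W : Submodule k J}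
    (hsup : Z ⊔ W = N) (hZ : ∀ z ∈ Z, ∀ x ∈ N, z * x = 0) (hW : Module.rank k W ≤ 1) :
    submoduleMul (submoduleMul N N) N = ⊥ := by
  obtain ⟨h, hhW, hWh⟩ := (rank_submodule_le_one_iff W).1 hW
  have hhN : h ∈ N := hsup ▸ Submodule.mem_sup_right hhW
  have exists_mul_eq_smul : ∀ x ∈ N, ∃ s : k, ∀ y ∈ N, x * y = s • (h * y) := by
    intro x hx
    obtain ⟨z, hz, w, hw, rfl⟩ := Submodule.mem_sup.1 (hsup ▸ hx)
    obtain ⟨s, rfl⟩ := Submodule.mem_span_singleton.1 (hWh hw)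
    exact ⟨s, fun y hy => by rw [add_mul, hZ z hz y hy, zero_add, smul_mul_assoc]⟩
  have sq_mem : h * h ∈ N := hmul (mul_mem_submoduleMul hhN hhN)
  have sq_mul_self : h * h * h = 0 := by
    obtain ⟨s, hs⟩ := exists_mul_eq_smul (h * h) sq_mem
    exact mul_eq_zero_of_mul_eq_smul_of_nilpotent hnilp sq_mem hhN (hs h hhN)
  have sq_mul : ∀ x ∈ N, h * h * x = 0 := by
    intro x hx
    obtain ⟨s, hs⟩ := exists_mul_eq_smul x hx
    rw [mul_comm, hs _ sq_mem, mul_comm, sq_mul_self, smul_zero]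
  have mul_self_le : submoduleMul N N ≤ Submodule.span k {h * h} := by
    refine submoduleMul_le.2 fun x hx y hy => Submodule.mem_span_singleton.2 ?_
    obtain ⟨s, hs⟩ := exists_mul_eq_smul x hx
    obtain ⟨t, ht⟩ := exists_mul_eq_smul y hy
    exact ⟨s * t, by rw [hs y hy, mul_comm h y, ht h hhN, smul_smul]⟩
  refine le_bot_iff.1 (submoduleMul_le.2 fun p hp x hx => (Submodule.mem_bot k).2 ?_)
  obtain ⟨r, rfl⟩ := Submodule.mem_span_singleton.1 (mul_self_le hp)
  rw [smul_mul_assoc, sq_mul x hx, smul_zero]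

section Peirce

variable [IsCommJordan J] {e : J}

/- The factor `2` is not cancelled because the additive group of `J` may have 2-torsion here. -/
theorem two_nsmul_commutator_sub_eq_zero_of_isIdempotentElem (he : IsIdempotentElem e) (x y : J) :
    2 • (2 • (e * (e * x * y) - e * x * (e * y)) - (e * (x * y) - x * (e * y))) = 0 := by
  have linearized : 2 • (e * (e * x * y) - e * x * (e * y) + (e * (x * e * y) - x * e * (e * y)) +
      (x * (e * e * y) - e * e * (x * y))) = 0 :=
    DFunLike.congr_fun (two_nsmul_lie_lmul_lmul_add_add_eq_zero e e x) y
  rw [mul_comm x e, he.eq] at linearized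
  rw [← linearized]
  abel

theorem idempotent_mul_mul_left_comm_of_mem_peirceComp (hchar : (2 : k) ≠ 0)
    (he : IsIdempotentElem e) {c : k} (hc : c ≠ 2⁻¹) {x : J} (hx : x ∈ peirceComp e c) (y : J) :
    e * (x * y) = x * (e * y) := by
  have hex : e * x = c • x := hx
  have smul_commutator : (2 * (2 * c - 1)) • (e * (x * y) - x * (e * y)) = 0 := by
    have h := two_nsmul_commutator_sub_eq_zero_of_isIdempotentElem he x y
    simp only [hex, smul_mul_assoc, mul_smul_comm] at h
    rw [← h]
    module
  have coeff_ne_zero : 2 * (2 * c - 1) ≠ 0 :=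
    mul_ne_zero hchar fun h => hc (eq_inv_of_mul_eq_one_right (sub_eq_zero.1 h))
  exact sub_eq_zero.1 ((smul_eq_zero.1 smul_commutator).resolve_left coeff_ne_zero)

theorem mul_mem_peirceComp (hchar : (2 : k) ≠ 0) (he : IsIdempotentElem e) {c d : k}
    (hc : c ≠ 2⁻¹) {x y : J} (hx : x ∈ peirceComp e c) (hy : y ∈ peirceComp e d) :
    x * y ∈ peirceComp e d := by
  have hey : e * y = d • y := hy
  change e * (x * y) = d • (x * y)
  rw [idempotent_mul_mul_left_comm_of_mem_peirceComp hchar he hc hx, hey, mul_smul_comm]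

variable {N : Submodule k J}

theorem mul_eq_zero_of_mem_inf_peirceComp (hchar : (2 : k) ≠ 0) (he : IsIdempotentElem e)
    (hmul : submoduleMul N N ≤ N) (hnilp : ∃ m, nseries N m = ⊥) {c d : k} (hc : c ≠ 2⁻¹)
    (hd : Module.rank k ↥(N ⊓ peirceComp e d) ≤ 1) {x y : J} (hx : x ∈ N ⊓ peirceComp e c)
    (hy : y ∈ N ⊓ peirceComp e d) : x * y = 0 := by
  obtain ⟨v, hv, hspan⟩ := (rank_submodule_le_one_iff _).1 hd
  have mul_mem : x * v ∈ N ⊓ peirceComp e d :=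
    ⟨hmul (mul_mem_submoduleMul hx.1 hv.1), mul_mem_peirceComp hchar he hc hx.2 hv.2⟩
  obtain ⟨r, hr⟩ := Submodule.mem_span_singleton.1 (hspan mul_mem)
  obtain ⟨s, rfl⟩ := Submodule.mem_span_singleton.1 (hspan hy)
  have v_mul : v * x = 0 :=
    mul_eq_zero_of_mul_eq_smul_of_nilpotent hnilp hv.1 hx.1 ((mul_comm v x).trans hr.symm)
  rw [mul_smul_comm, mul_comm, v_mul, smul_zero]

theorem mul_eq_zero_of_mem_inf_peirceComp_of_sup_eq (hchar : (2 : k) ≠ 0)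
    (he : IsIdempotentElem e) (hmul : submoduleMul N N ≤ N) (hnilp : ∃ m, nseries N m = ⊥)
    (hdecomp : (N ⊓ peirceComp e (0 : k)) ⊔ (N ⊓ peirceComp e (2⁻¹ : k)) ⊔
        (N ⊓ peirceComp e (1 : k)) = N)
    (h0 : Module.rank k ↥(N ⊓ peirceComp e (0 : k)) ≤ 1)
    (hhalf : Module.rank k ↥(N ⊓ peirceComp e (2⁻¹ : k)) ≤ 1)
    (h1 : Module.rank k ↥(N ⊓ peirceComp e (1 : k)) ≤ 1)
    {c : k} (hc : c ≠ 2⁻¹) {x y : J} (hx : x ∈ N ⊓ peirceComp e c) (hy : y ∈ N) :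
    x * y = 0 := by
  obtain ⟨u, hu, y₁, hy₁, rfl⟩ := Submodule.mem_sup.1 (hdecomp.symm ▸ hy)
  obtain ⟨y₀, hy₀, w, hw, rfl⟩ := Submodule.mem_sup.1 hu
  simp only [mul_add, mul_eq_zero_of_mem_inf_peirceComp hchar he hmul hnilp hc h0 hx hy₀,
    mul_eq_zero_of_mem_inf_peirceComp hchar he hmul hnilp hc hhalf hx hw,
    mul_eq_zero_of_mem_inf_peirceComp hchar he hmul hnilp hc h1 hx hy₁, add_zero]

theorem no_type_111_with_all_components_general (hchar : (2 : k) ≠ 0) (he : IsIdempotentElem e)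
    (hmul : submoduleMul N N ≤ N) (hnilp : ∃ m, nseries N m = ⊥)
    (hdecomp : (N ⊓ peirceComp e (0 : k)) ⊔ (N ⊓ peirceComp e (2⁻¹ : k)) ⊔
        (N ⊓ peirceComp e (1 : k)) = N)
    (h0 : Module.rank k ↥(N ⊓ peirceComp e (0 : k)) ≤ 1)
    (hhalf : Module.rank k ↥(N ⊓ peirceComp e (2⁻¹ : k)) ≤ 1)
    (h1 : Module.rank k ↥(N ⊓ peirceComp e (1 : k)) ≤ 1) :
    submoduleMul (submoduleMul N N) N = ⊥ := by
  have zero_ne_half : (0 : k) ≠ 2⁻¹ := (inv_ne_zero hchar).symm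
  have one_ne_half : (1 : k) ≠ 2⁻¹ := fun h =>
    one_ne_zero (α := k) (by linear_combination 2 * h + mul_inv_cancel₀ hchar)
  refine submoduleMul_submoduleMul_eq_bot_of_sup_eq hmul hnilp
    ((sup_right_comm _ _ _).trans hdecomp) (fun z hz x hx => ?_) hhalf
  obtain ⟨z₀, hz₀, z₁, hz₁, rfl⟩ := Submodule.mem_sup.1 hz
  have annihilates {c : k} (hc : c ≠ 2⁻¹) {y : J} (hy : y ∈ N ⊓ peirceComp e c) : y * x = 0 :=
    mul_eq_zero_of_mem_inf_peirceComp_of_sup_eq hchar he hmul hnilp hdecomp h0 hhalf h1 hc hy hx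
  rw [add_mul, annihilates zero_ne_half hz₀, annihilates one_ne_half hz₁, add_zero]

end Peirce

/-- Let `J` be a finite-dimensional Jordan algebra over a field `k` of characteristic ≠ 2,
`e` an idempotent, `N` a nilpotent ideal with `N = N_0 ⊕ N_{1/2} ⊕ N_1` where
`N_i = N ∩ J_i(e)` and each `N_i` is one-dimensional. Then `N^⟨3⟩ = (N·N)·N = 0`;
in particular the nilpotency type of `N` cannot be `(1,1,1)`. -/
theorem no_type_111_with_all_components (hchar : (2 : k) ≠ 0)
    [FiniteDimensional k J]
    (hJordan : ∀ x y : J, ((x * x) * y) * x = (x * x) * (y * x))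
    (e : J) (he : e * e = e) (hne : e ≠ 0)
    (N : Submodule k J) (hideal : ∀ x ∈ N, ∀ y : J, x * y ∈ N)
    (hnilp : ∃ m, nseries N m = ⊥)
    (hdecomp : (N ⊓ peirceComp e (0 : k)) ⊔ (N ⊓ peirceComp e (2⁻¹ : k)) ⊔
        (N ⊓ peirceComp e (1 : k)) = N)
    (h0 : Module.finrank k ↥(N ⊓ peirceComp e (0 : k)) = 1)
    (hhalf : Module.finrank k ↥(N ⊓ peirceComp e (2⁻¹ : k)) = 1)
    (h1 : Module.finrank k ↥(N ⊓ peirceComp e (1 : k)) = 1) :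
    submoduleMul (submoduleMul N N) N = ⊥ := by
  have : IsCommJordan J := ⟨fun x y => by
    rw [mul_comm (x * y), mul_comm x y, ← hJordan, mul_comm, mul_comm y]⟩
  exact no_type_111_with_all_components_general hchar he
    (submoduleMul_le.2 fun x hx y _ => hideal x hx y) hnilp hdecomp
    (Module.rank_eq_one_iff_finrank_eq_one.2 h0).le
    (Module.rank_eq_one_iff_finrank_eq_one.2 hhalf).le
    (Module.rank_eq_one_iff_finrank_eq_one.2 h1).le
end

section
/- Every finite-dimensional Jordan algebra J over a field k of characteristic ≠ 2 has a unique maximal nilpotent ideal (its radical): there exists a nilpotent ideal N of J that contains every nilpotent ideal of J. -/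
variable {k : Type*} [Field k] {J : Type*} [NonUnitalNonAssocCommRing J]
  [Module k J] [SMulCommClass k J J] [IsScalarTower k J J]
/-!
For submodules `B` and `U`, let `T_B U = {v | B v ⊆ U}`, and call `B` *Engel* if `⊤` is the only
fixed point of `T_B`. Under the ascending chain condition the iterates of `T_B` on `⊥` reach a fixed
point, and an ideal is Engel exactly when it is nilpotent. So it suffices that the sum of an Engel
ideal `M` and a nilpotent ideal `N` is Engel. Climbing the chain `M + N^⟨m⟩` one generator at a
time reduces this to the case `C = B + R x` with `C C ⊆ B` and `B` Engel. If `T_C U = U` and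
`v ∈ T_B U`, the linearized Jordan identity puts `b (c (x v))`, `x (b (x v))` and `x (x (x v))`
in `U` for all `b, c ∈ B`. The first two show `b (x v) ∈ T_C U = U`, so `T_B U` is stable under `x`;
the third then gives `x (x v)`, `x v`, `v ∈ U` in turn, whence `T_B U = U` and `U = ⊤`.
-/

open Submodule

section Transporter

variable {R A : Type*} [CommSemiring R] [NonUnitalNonAssocSemiring A] [Module R A]

theorem mul_mem_sup {M N : Submodule R A} (hM : ∀ x ∈ M, ∀ y : A, x * y ∈ M)
    (hN : ∀ x ∈ N, ∀ y : A, x * y ∈ N) : ∀ x ∈ M ⊔ N, ∀ y : A, x * y ∈ M ⊔ N := by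
  intro x hx y
  obtain ⟨a, ha, b, hb, rfl⟩ := mem_sup.mp hx
  rw [add_mul]
  exact add_mem_sup (hM a ha y) (hN b hb y)

variable [SMulCommClass R A A]

/-- The transporter of `B` into `U`: the largest submodule that left multiplication by `B` maps
into `U`. -/
def transporter (B U : Submodule R A) : Submodule R A where
  carrier := {v | ∀ b ∈ B, b * v ∈ U}
  add_mem' hv hw b hb := by simpa only [mul_add] using U.add_mem (hv b hb) (hw b hb)
  zero_mem' b _ := by simp only [mul_zero, U.zero_mem]
  smul_mem' r v hv b hb := by simpa only [mul_smul_comm] using U.smul_mem r (hv b hb)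

theorem transporter_mono (B : Submodule R A) : Monotone (transporter B) :=
  fun _ _ hUV _ hv b hb => hUV (hv b hb)

theorem transporter_anti {B C : Submodule R A} (hBC : B ≤ C) (U : Submodule R A) :
    transporter C U ≤ transporter B U :=
  fun _ hv b hb => hv b (hBC hb)

/-- A submodule `B` is Engel if `⊤` is the only fixed point of `transporter B`. In other words, for
every `U ≠ ⊤` stable under left multiplication by `B` there is a nonzero vector of `A ⧸ U` killed
by `B`, which is the conclusion of Engel's theorem. -/
def IsEngel (B : Submodule R A) : Prop :=
  ∀ U : Submodule R A, transporter B U = U → U = ⊤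

theorem IsEngel.exists_iterate_transporter_eq_top [IsNoetherian R A] {B : Submodule R A}
    (hB : IsEngel B) : ∃ n, (transporter B)^[n] ⊥ = ⊤ := by
  have hmono : Monotone fun n => (transporter B)^[n] ⊥ :=
    (transporter_mono B).monotone_iterate_of_le_map bot_le
  obtain ⟨n, hn⟩ := monotone_stabilizes_iff_noetherian.mpr ‹_› ⟨_, hmono⟩
  refine ⟨n, hB _ ?_⟩
  rw [← Function.iterate_succ_apply' (transporter B)]
  exact (hn (n + 1) n.le_succ).symm

variable [IsScalarTower R A A]

theorem le_transporter_iff {B U V : Submodule R A} :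
    V ≤ transporter B U ↔ map₂ (LinearMap.mul R A) B V ≤ U :=
  ⟨fun h => map₂_le.mpr fun b hb _ hv => h hv b hb, fun h _ hv b hb => map₂_le.mp h b hb _ hv⟩

theorem mem_transporter_sup_span_singleton {B U : Submodule R A} {x v : A} :
    v ∈ transporter (B ⊔ span R {x}) U ↔ v ∈ transporter B U ∧ x * v ∈ U := by
  refine ⟨fun h => ⟨transporter_anti le_sup_left U h,
    h x (mem_sup_right (mem_span_singleton_self x))⟩, fun ⟨hB, hx⟩ c hc => ?_⟩
  obtain ⟨b, hb, y, hy, rfl⟩ := mem_sup.mp hc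
  obtain ⟨r, rfl⟩ := mem_span_singleton.mp hy
  rw [add_mul, smul_mul_assoc]
  exact U.add_mem (hB b hb) (U.smul_mem r hx)

end Transporter

section LowerSeries

variable {R A : Type*} [CommSemiring R] [NonUnitalNonAssocCommSemiring A] [Module R A]
  [SMulCommClass R A A] [IsScalarTower R A A]

/-- The descending series of `nseries` over an arbitrary commutative semiring of scalars, with the
same index shift: `lowerSeries N m = N^⟨m+1⟩`. -/
def lowerSeries (N : Submodule R A) : ℕ → Submodule R A
  | 0 => N
  | m + 1 => map₂ (LinearMap.mul R A) (lowerSeries N m) N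

/-- Nilpotent ideals, in terms of the descending series `lowerSeries`. -/
structure IsNilpotentIdeal (N : Submodule R A) : Prop where
  mul_mem : ∀ x ∈ N, ∀ y : A, x * y ∈ N
  exists_lowerSeries_eq_bot : ∃ m, lowerSeries N m = ⊥

theorem map₂_mul_comm (B C : Submodule R A) :
    map₂ (LinearMap.mul R A) B C = map₂ (LinearMap.mul R A) C B := by
  rw [← map₂_flip, LinearMap.flip_mul]

theorem lowerSeries_antitone {N : Submodule R A} (hN : ∀ x ∈ N, ∀ y : A, x * y ∈ N) :
    Antitone (lowerSeries N) := by
  refine antitone_nat_of_succ_le fun m => ?_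
  induction m with
  | zero => exact map₂_le.mpr fun x hx y _ => hN x hx y
  | succ m ih => exact map₂_le_map₂_left ih

theorem lowerSeries_le_iff {N U : Submodule R A} {m : ℕ} :
    lowerSeries N m ≤ U ↔ N ≤ (transporter N)^[m] U := by
  induction m generalizing U with
  | zero => rfl
  | succ m ih =>
    rw [lowerSeries, map₂_mul_comm, ← le_transporter_iff, ih, Function.iterate_succ_apply]

theorem IsEngel.exists_lowerSeries_eq_bot [IsNoetherian R A] {N : Submodule R A}
    (hN : IsEngel N) : ∃ m, lowerSeries N m = ⊥ := by
  obtain ⟨m, hm⟩ := hN.exists_iterate_transporter_eq_top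
  exact ⟨m, le_bot_iff.mp (lowerSeries_le_iff.mpr (hm ▸ le_top))⟩

theorem IsNilpotentIdeal.isEngel {N : Submodule R A} (hN : IsNilpotentIdeal N) : IsEngel N := by
  intro U hU
  obtain ⟨m, hm⟩ := hN.exists_lowerSeries_eq_bot
  have hNU : N ≤ U := by
    rw [← Function.iterate_fixed hU m, ← lowerSeries_le_iff, hm]
    exact bot_le
  rw [eq_top_iff, ← hU]
  exact fun y _ b hb => hNU (hN.mul_mem b hb y)

theorem isNilpotentIdeal_bot : IsNilpotentIdeal (⊥ : Submodule R A) where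
  mul_mem x hx y := by rw [(mem_bot R).mp hx, zero_mul]; exact zero_mem _
  exists_lowerSeries_eq_bot := ⟨0, rfl⟩

theorem mul_mem_sup_lowerSeries_succ {M N : Submodule R A} (hM : ∀ x ∈ M, ∀ y : A, x * y ∈ M)
    (hN : ∀ x ∈ N, ∀ y : A, x * y ∈ N) {m : ℕ} {x y : A} (hx : x ∈ M ⊔ lowerSeries N m)
    (hy : y ∈ M ⊔ lowerSeries N m) : x * y ∈ M ⊔ lowerSeries N (m + 1) := by
  obtain ⟨a, ha, c, hc, rfl⟩ := mem_sup.mp hx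
  obtain ⟨b, hb, d, hd, rfl⟩ := mem_sup.mp hy
  have hdN : d ∈ N := lowerSeries_antitone hN m.zero_le hd
  rw [add_mul, mul_add c, mul_comm c b, ← add_assoc]
  exact add_mem_sup (M.add_mem (hM a ha _) (hM b hb c))
    (apply_mem_map₂ (LinearMap.mul R A) hc hdN)

end LowerSeries

section Jordan

theorem isCommJordan_of_mul_self_mul_mul {A : Type*} [CommMagma A]
    (h : ∀ x y : A, x * x * y * x = x * x * (y * x)) : IsCommJordan A where
  lmul_comm_rmul_rmul x y := by
    rw [mul_comm (x * y), mul_comm x y, ← h, mul_comm y, mul_comm _ x]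

theorem jordan_linearized {A : Type*} [NonUnitalNonAssocCommRing A] [IsCommJordan A]
    (h2 : IsSMulRegular A 2) (a b c d : A) :
    b * c * (a * d) + c * a * (b * d) + a * b * (c * d) =
      a * (b * c * d) + b * (c * a * d) + c * (a * b * d) := by
  have htwice : 2 • (a * (b * c * d) - b * c * (a * d) + (b * (c * a * d) - c * a * (b * d)) +
      (c * (a * b * d) - a * b * (c * d))) = 2 • (0 : A) :=
    (DFunLike.congr_fun (two_nsmul_lie_lmul_lmul_add_add_eq_zero a b c) d).trans (smul_zero _).symm
  linear_combination (norm := abel) -h2 htwice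

theorem jordan_linearized_triple {A : Type*} [NonUnitalNonAssocCommRing A] [IsCommJordan A]
    (h2 : IsSMulRegular A 2) (a b c d : A) :
    a * (b * (c * d)) + c * (b * (a * d)) + a * c * b * d =
      a * b * (c * d) + c * b * (a * d) + a * c * (b * d) := by
  have h := jordan_linearized h2 a c d b
  rw [mul_comm d a, mul_comm d b, mul_comm d, mul_comm (c * d) b, mul_comm (a * d) b,
    mul_comm (c * d), mul_comm (a * d)] at h
  linear_combination (norm := abel) -h

theorem isSMulRegular_two_of_isUnit {R M : Type*} [Semiring R] [AddCommMonoid M] [Module R M]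
    (h2 : IsUnit (2 : R)) : IsSMulRegular M 2 := by
  intro a b hab
  refine h2.isSMulRegular M ?_
  simpa only [two_smul] using hab

theorem mem_of_add_self_mem {R M : Type*} [Semiring R] [AddCommMonoid M] [Module R M]
    (h2 : IsUnit (2 : R)) {U : Submodule R M} {a : M} (ha : a + a ∈ U) : a ∈ U := by
  rwa [← two_smul R, smul_mem_iff_of_isUnit U h2] at ha

variable {R A : Type*} [CommRing R] [NonUnitalNonAssocCommRing A] [Module R A]
  [IsCommJordan A]

theorem lmul_lmul_lmul_mem_of_lmul_mul_mem (h2 : IsUnit (2 : R)) {U : Submodule R A} {x y v : A}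
    (hxy : x * y * (x * v) ∈ U) (hxx : x * x * (y * v) ∈ U) (hxxy : x * x * y * v ∈ U) :
    x * (y * (x * v)) ∈ U := by
  have hlin : x * (y * (x * v)) + x * (y * (x * v)) =
      x * y * (x * v) + x * y * (x * v) + x * x * (y * v) - x * x * y * v := by
    linear_combination (norm := abel)
      jordan_linearized_triple (isSMulRegular_two_of_isUnit h2) x y x v
  apply mem_of_add_self_mem h2
  rw [hlin]
  exact sub_mem (add_mem (add_mem hxy hxy) hxx) hxxy

variable [SMulCommClass R A A] {B C U : Submodule R A} {b c v x : A}

theorem lmul_mul_lmul_mem (h2 : IsUnit (2 : R)) (hBC : B ≤ C) (hCC : ∀ a ∈ C, ∀ c ∈ C, a * c ∈ B)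
    (hU : U ≤ transporter C U) (hv : v ∈ transporter B U) (hb : b ∈ B) (hc : c ∈ B) (hx : x ∈ C) :
    b * c * (x * v) ∈ U := by
  have hbc : b * c ∈ B := hCC b (hBC hb) c (hBC hc)
  have hcx : c * x ∈ B := hCC c (hBC hc) x hx
  have hxb : x * b ∈ B := hCC x hx b (hBC hb)
  have hlin : b * c * (x * v) = x * (b * c * v) + b * (c * x * v) + c * (x * b * v)
      - c * x * (b * v) - x * b * (c * v) := by
    linear_combination (norm := abel) jordan_linearized (isSMulRegular_two_of_isUnit h2) x b c v
  rw [hlin]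
  exact sub_mem (sub_mem (add_mem (add_mem (hU (hv _ hbc) x hx) (hU (hv _ hcx) b (hBC hb)))
    (hU (hv _ hxb) c (hBC hc))) (hU (hv b hb) _ (hBC hcx))) (hU (hv c hc) _ (hBC hxb))

theorem lmul_mul_self_lmul_mem (hCC : ∀ a ∈ C, ∀ c ∈ C, a * c ∈ B) (hU : U ≤ transporter C U)
    (hv : v ∈ transporter B U) (hx : x ∈ C) : x * x * (x * v) ∈ U := by
  rw [IsJordan.lmul_lmul_comm_lmul]
  exact hU (hv _ (hCC x hx x hx)) x hx

theorem lmul_mul_lmul_left_mem (h2 : IsUnit (2 : R)) (hBC : B ≤ C)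
    (hCC : ∀ a ∈ C, ∀ c ∈ C, a * c ∈ B) (hU : U ≤ transporter C U) (hv : v ∈ transporter B U)
    (hb : b ∈ B) (hx : x ∈ C) : x * b * (x * v) ∈ U := by
  have hxx : x * x ∈ B := hCC x hx x hx
  have hxbv : x * (x * b * v) ∈ U := hU (hv _ (hCC x hx b (hBC hb))) x hx
  have hlin : x * b * (x * v) + x * b * (x * v) =
      x * (x * b * v) + x * (x * b * v) + b * (x * x * v) - x * x * (b * v) := by
    have h := jordan_linearized (isSMulRegular_two_of_isUnit h2) x x b v
    rw [mul_comm b x] at h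
    linear_combination (norm := abel) h
  apply mem_of_add_self_mem h2
  rw [hlin]
  exact sub_mem (add_mem (add_mem hxbv hxbv) (hU (hv _ hxx) b (hBC hb)))
    (hU (hv b hb) _ (hBC hxx))

theorem lmul_lmul_lmul_mem (h2 : IsUnit (2 : R)) (hBC : B ≤ C)
    (hCC : ∀ a ∈ C, ∀ c ∈ C, a * c ∈ B) (hU : U ≤ transporter C U) (hv : v ∈ transporter B U)
    (hb : b ∈ B) (hc : c ∈ B) (hx : x ∈ C) : b * (c * (x * v)) ∈ U := by
  have hbx : b * x ∈ B := hCC b (hBC hb) x hx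
  have hxc : x * c ∈ B := hCC x hx c (hBC hc)
  have hlin : b * (c * (x * v)) = b * c * (x * v) + x * c * (b * v) + b * x * (c * v)
      - x * (c * (b * v)) - b * x * c * v := by
    linear_combination (norm := abel)
      jordan_linearized_triple (isSMulRegular_two_of_isUnit h2) b c x v
  rw [hlin]
  exact sub_mem (sub_mem (add_mem (add_mem (lmul_mul_lmul_mem h2 hBC hCC hU hv hb hc hx)
    (hU (hv b hb) _ (hBC hxc))) (hU (hv c hc) _ (hBC hbx))) (hU (hU (hv b hb) c (hBC hc)) x hx))
    (hv _ (hCC _ (hBC hbx) c (hBC hc)))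

theorem lmul_lmul_lmul_left_mem (h2 : IsUnit (2 : R)) (hBC : B ≤ C)
    (hCC : ∀ a ∈ C, ∀ c ∈ C, a * c ∈ B) (hU : U ≤ transporter C U) (hv : v ∈ transporter B U)
    (hb : b ∈ B) (hx : x ∈ C) : x * (b * (x * v)) ∈ U := by
  have hxx : x * x ∈ B := hCC x hx x hx
  exact lmul_lmul_lmul_mem_of_lmul_mul_mem h2 (lmul_mul_lmul_left_mem h2 hBC hCC hU hv hb hx)
    (hU (hv b hb) _ (hBC hxx)) (hv _ (hCC _ (hBC hxx) b (hBC hb)))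

theorem lmul_lmul_lmul_self_mem (h2 : IsUnit (2 : R)) (hBC : B ≤ C)
    (hCC : ∀ a ∈ C, ∀ c ∈ C, a * c ∈ B) (hU : U ≤ transporter C U) (hv : v ∈ transporter B U)
    (hx : x ∈ C) : x * (x * (x * v)) ∈ U := by
  have hxxx : x * x * (x * v) ∈ U := lmul_mul_self_lmul_mem hCC hU hv hx
  exact lmul_lmul_lmul_mem_of_lmul_mul_mem h2 hxxx hxxx (hv _ (hCC _ (hBC (hCC x hx x hx)) x hx))

variable [IsScalarTower R A A]

theorem IsEngel.sup_span_singleton (h2 : IsUnit (2 : R)) (hB : IsEngel B)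
    (hCC : ∀ a ∈ B ⊔ span R {x}, ∀ c ∈ B ⊔ span R {x}, a * c ∈ B) :
    IsEngel (B ⊔ span R {x}) := by
  intro U hfix
  have hU : U ≤ transporter (B ⊔ span R {x}) U := hfix.ge
  have hx : x ∈ B ⊔ span R {x} := mem_sup_right (mem_span_singleton_self x)
  have mem_U {w : A} (hw : w ∈ transporter B U) (hxw : x * w ∈ U) : w ∈ U :=
    hfix.le (mem_transporter_sup_span_singleton.mpr ⟨hw, hxw⟩)
  have hstable {w : A} (hw : w ∈ transporter B U) : x * w ∈ transporter B U := fun b hb =>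
    mem_U (fun c hc => lmul_lmul_lmul_mem h2 le_sup_left hCC hU hw hc hb hx)
      (lmul_lmul_lmul_left_mem h2 le_sup_left hCC hU hw hb hx)
  refine hB U (le_antisymm (fun v hv => ?_) (hU.trans (transporter_anti le_sup_left U)))
  have hxxv : x * (x * v) ∈ U :=
    mem_U (hstable (hstable hv)) (lmul_lmul_lmul_self_mem h2 le_sup_left hCC hU hv hx)
  exact mem_U hv (mem_U (hstable hv) hxxv)

theorem IsEngel.of_mul_mem (h2 : IsUnit (2 : R)) (hB : IsEngel B) (hBC : B ≤ C) (hfg : C.FG)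
    (hCC : ∀ a ∈ C, ∀ c ∈ C, a * c ∈ B) : IsEngel C := by
  classical
  obtain ⟨S, rfl⟩ := hfg
  suffices ∀ T ⊆ S, IsEngel (B ⊔ span R (T : Set A)) by
    simpa only [sup_eq_right.mpr hBC] using this S subset_rfl
  intro T
  induction T using Finset.induction_on with
  | empty => simpa using hB
  | insert x T _ ih =>
    intro hTS
    have hle : B ⊔ span R (T : Set A) ⊔ span R {x} ≤ span R (S : Set A) := by
      rw [sup_assoc, sup_comm (span R (T : Set A)), ← span_insert, ← Finset.coe_insert]
      exact sup_le hBC (span_mono (Finset.coe_subset.mpr hTS))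
    rw [Finset.coe_insert, span_insert, sup_comm (span R {x}), ← sup_assoc]
    exact (ih ((Finset.subset_insert x T).trans hTS)).sup_span_singleton h2
      fun a ha c hc => mem_sup_left (hCC a (hle ha) c (hle hc))

theorem IsEngel.sup_isNilpotentIdeal [IsNoetherian R A] (h2 : IsUnit (2 : R))
    {M N : Submodule R A} (hM : IsEngel M) (hMA : ∀ x ∈ M, ∀ y : A, x * y ∈ M)
    (hN : IsNilpotentIdeal N) : IsEngel (M ⊔ N) := by
  obtain ⟨m, hm⟩ := hN.exists_lowerSeries_eq_bot
  have hbase : IsEngel (M ⊔ lowerSeries N m) := by rwa [hm, sup_bot_eq]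
  clear hm
  induction m with
  | zero => exact hbase
  | succ m ih =>
    exact ih (hbase.of_mul_mem h2
      (sup_le_sup_left (lowerSeries_antitone hN.mul_mem m.le_succ) M) (IsNoetherian.noetherian _)
      fun a ha c hc => mul_mem_sup_lowerSeries_succ hMA hN.mul_mem ha hc)

theorem IsNilpotentIdeal.sup [IsNoetherian R A] (h2 : IsUnit (2 : R)) {M N : Submodule R A}
    (hM : IsNilpotentIdeal M) (hN : IsNilpotentIdeal N) : IsNilpotentIdeal (M ⊔ N) where
  mul_mem := mul_mem_sup hM.mul_mem hN.mul_mem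
  exists_lowerSeries_eq_bot :=
    (hM.isEngel.sup_isNilpotentIdeal h2 hM.mul_mem hN).exists_lowerSeries_eq_bot

theorem exists_radical_general [IsNoetherian R A] (h2 : IsUnit (2 : R)) :
    ∃ N : Submodule R A, IsGreatest {N | IsNilpotentIdeal N} N := by
  have hclosed : SupClosed {N : Submodule R A | IsNilpotentIdeal N} :=
    fun _ hM _ hN => IsNilpotentIdeal.sup h2 hM hN
  exact ⟨sSup {N | IsNilpotentIdeal N},
    CompleteLattice.WellFoundedGT.isSupClosedCompact _ inferInstance _
      ⟨⊥, isNilpotentIdeal_bot⟩ hclosed, fun _ hN => le_sSup hN⟩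

end Jordan

theorem submoduleMul_eq_map₂ (B C : Submodule k J) :
    submoduleMul B C = map₂ (LinearMap.mul k J) B C := by
  refine le_antisymm (span_le.mpr ?_) (map₂_le.mpr fun b hb c hc => ?_)
  · rintro _ ⟨b, hb, c, hc, rfl⟩
    exact apply_mem_map₂ (LinearMap.mul k J) hb hc
  · exact subset_span ⟨b, hb, c, hc, rfl⟩

theorem nseries_eq_lowerSeries (N : Submodule k J) (m : ℕ) : nseries N m = lowerSeries N m := by
  induction m with
  | zero => rfl
  | succ m ih => rw [nseries, lowerSeries, ih, submoduleMul_eq_map₂]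

/-- Every finite-dimensional Jordan algebra `J` over a field `k` of characteristic ≠ 2 has
a unique maximal nilpotent ideal (its radical): there is a nilpotent ideal of `J`
containing every nilpotent ideal of `J`. -/
theorem exists_radical (hchar : (2 : k) ≠ 0)
    [FiniteDimensional k J]
    (hJordan : ∀ x y : J, ((x * x) * y) * x = (x * x) * (y * x)) :
    ∃ N : Submodule k J, (∀ x ∈ N, ∀ y : J, x * y ∈ N) ∧ (∃ m, nseries N m = ⊥) ∧
      ∀ M : Submodule k J, (∀ x ∈ M, ∀ y : J, x * y ∈ M) → (∃ m, nseries M m = ⊥) →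
        M ≤ N := by
  have : IsCommJordan J := isCommJordan_of_mul_self_mul_mul hJordan
  obtain ⟨N, hN, hmax⟩ := exists_radical_general (R := k) (A := J) hchar.isUnit
  simp only [nseries_eq_lowerSeries]
  exact ⟨N, hN.mul_mem, hN.exists_lowerSeries_eq_bot, fun M hM hnil => hmax ⟨hM, hnil⟩⟩
end

section
/- Let k be an algebraically closed field of characteristic ≠ 2 and let J be a two-dimensional Jordan algebra over k. Then J has a basis {a, b} whose multiplication table is one of the following six: (i) a² = a, b² = b, a·b = 0; (ii) a² = a, a·b = b, b² = 0; (iii) a² = a, a·b = (1/2)b, b² = 0; (iv) a² = b, a·b = 0, b² = 0; (v) a² = a, a·b = 0, b² = 0; (vi) a² = b² = a·b = 0. -/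
/-!
For an idempotent `e` of a Jordan algebra, left multiplication `L` by `e` satisfies
`L (2 L - 1) (L - 1) = 0`, so the algebra is spanned by eigenvectors of `L` for the eigenvalues
`0`, `1/2` and `1`. In dimension two, a nonzero idempotent `e` is therefore completed to a basis by
an eigenvector `b`, and the Jordan identity restricts `b²`:

* for eigenvalue `0`, `b²` is a multiple of `b`, and rescaling `b` gives (v) or (i);
* for eigenvalue `1/2`, `b² = 0`, which is (iii);
* for eigenvalue `1`, `e` is a unit; completing the square makes `b²` a multiple `t e` of `e`, and
  we get (ii) if `t = 0` and otherwise (i), from the idempotents `(e ± b / √t) / 2`.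

If there is no nonzero idempotent, then either all squares vanish, which is (vi) by polarization, or
some `a` has `a² ≠ 0`. In the latter case `a` and `a²` form a basis, and `a³ = 0` because otherwise
the subalgebra generated by `a` would contain a nonzero idempotent; this is (iv).
-/

section LinearAlgebra

variable {k V : Type*} [Field k] [AddCommGroup V] [Module k V] {a b : V}

theorem span_pair_eq_top_of_finrank_eq_two (hdim : Module.finrank k V = 2)
    (hab : LinearIndependent k ![a, b]) : Submodule.span k {a, b} = ⊤ := by
  simpa [Set.pair_comm] using hab.span_eq_top_of_card_eq_finrank (by simp [hdim])

theorem exists_eq_smul_add_smul_of_finrank_eq_two (hdim : Module.finrank k V = 2)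
    (hab : LinearIndependent k ![a, b]) (x : V) : ∃ p q : k, x = p • a + q • b := by
  have hx : x ∈ Submodule.span k {a, b} :=
    span_pair_eq_top_of_finrank_eq_two hdim hab ▸ Submodule.mem_top
  obtain ⟨p, q, hpq⟩ := Submodule.mem_span_pair.mp hx
  exact ⟨p, q, hpq.symm⟩

theorem linearIndependent_pair_smul_right {t : k} (ht : t ≠ 0)
    (hab : LinearIndependent k ![a, b]) : LinearIndependent k ![a, t • b] := by
  simpa using (LinearIndependent.pair_smul_smul_iff isUnit_one ht.isUnit).mpr hab

end LinearAlgebra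

/-- The six multiplication tables of the classification, as a condition on an ordered pair `(a, b)`.
Linear independence of the pair is not part of the condition. -/
def HasNormalTable (k : Type*) [Field k] {J : Type*} [NonUnitalNonAssocCommRing J] [Module k J]
    (a b : J) : Prop :=
  (a * a = a ∧ b * b = b ∧ a * b = 0) ∨
  (a * a = a ∧ a * b = b ∧ b * b = 0) ∨
  (a * a = a ∧ a * b = (2⁻¹ : k) • b ∧ b * b = 0) ∨
  (a * a = b ∧ a * b = 0 ∧ b * b = 0) ∨
  (a * a = a ∧ a * b = 0 ∧ b * b = 0) ∨
  (a * a = 0 ∧ b * b = 0 ∧ a * b = 0)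

section JordanAlgebra

variable {k : Type*} [Field k] {J : Type*} [NonUnitalNonAssocCommRing J] [Module k J]

theorem mul_eq_zero_of_forall_mul_self_eq_zero (h2 : (2 : k) ≠ 0) (hsq : ∀ x : J, x * x = 0)
    (a b : J) : a * b = 0 := by
  have hpolar : (2 : k) • (a * b) = 0 :=
    calc (2 : k) • (a * b) = a * a + a * b + (b * a + b * b) := by
          rw [hsq, hsq, mul_comm b a]; module
      _ = (a + b) * (a + b) := by rw [add_mul, mul_add, mul_add]
      _ = 0 := hsq _
  exact (smul_eq_zero.mp hpolar).resolve_left h2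

section JordanIdentity

variable [IsCommJordan J]

theorem mul_self_mul_mul_self (a : J) : a * a * (a * a) = a * (a * (a * a)) :=
  IsCommJordan.lmul_comm_rmul_rmul a a

theorem jordan_identity_linearized (h2 : (2 : k) ≠ 0) (a x y : J) :
    (2 : k) • (a * (a * x * y)) + x * (a * a * y) =
      (2 : k) • (a * x * (a * y)) + a * a * (x * y) := by
  have hlie : 2 • (a * (a * x * y) - a * x * (a * y) + (a * (x * a * y) - x * a * (a * y)) +
      (x * (a * a * y) - a * a * (x * y))) = 0 :=
    DFunLike.congr_fun (two_nsmul_lie_lmul_lmul_add_add_eq_zero a a x) y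
  rw [mul_comm x a] at hlie
  refine smul_right_injective J h2 ?_
  linear_combination (norm := module) (1 : k) • hlie

theorem peirce_polynomial (h2 : (2 : k) ≠ 0) {e : J} (he : IsIdempotentElem e) (x : J) :
    (2 : k) • (e * (e * (e * x))) - (3 : k) • (e * (e * x)) + e * x = 0 := by
  have hlin := jordan_identity_linearized h2 e x e
  rw [mul_comm (e * x) e, he.eq, he.eq, mul_comm x e, mul_comm (e * x) e] at hlin
  linear_combination (norm := module) hlin

end JordanIdentity

variable [SMulCommClass k J J]

/-- The Peirce space of `e` for `q`: the eigenspace for the eigenvalue `q` of left multiplication by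
`e`. It is meant for idempotent `e` in a Jordan algebra, where only `q = 0, 1/2, 1` contribute. -/
def peirceSpace (e : J) (q : k) : Submodule k J :=
  Module.End.eigenspace (LinearMap.mulLeft k e) q

theorem mem_peirceSpace {e : J} {q : k} {x : J} : x ∈ peirceSpace e q ↔ e * x = q • x :=
  Module.End.mem_eigenspace_iff

section Peirce

variable [IsCommJordan J] {e : J}

-- The components of `x` are the Lagrange basis polynomials for the nodes `0`, `1/2`, `1`, evaluated
-- at left multiplication by `e` and applied to `x`.
theorem peirceSpace_zero_sup_half_sup_one_eq_top (h2 : (2 : k) ≠ 0) (he : IsIdempotentElem e) :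
    peirceSpace e (0 : k) ⊔ peirceSpace e (2⁻¹ : k) ⊔ peirceSpace e (1 : k) = ⊤ := by
  refine eq_top_iff.mpr fun x _ ↦ ?_
  have hpoly := peirce_polynomial h2 he x
  have hzero : x - (3 : k) • (e * x) + (2 : k) • (e * (e * x)) ∈ peirceSpace e (0 : k) := by
    rw [mem_peirceSpace]
    simp only [mul_add, mul_sub, mul_smul_comm]
    linear_combination (norm := module) hpoly
  have hhalf : (4 : k) • (e * x - e * (e * x)) ∈ peirceSpace e (2⁻¹ : k) := by
    have hdouble : (2 : k)⁻¹ * 4 = 2 := by rw [inv_mul_eq_iff_eq_mul₀ h2]; norm_num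
    rw [mem_peirceSpace, smul_smul, hdouble]
    simp only [mul_sub, mul_smul_comm]
    linear_combination (norm := module) (-2 : k) • hpoly
  have hone : (2 : k) • (e * (e * x)) - e * x ∈ peirceSpace e (1 : k) := by
    rw [mem_peirceSpace]
    simp only [mul_sub, mul_smul_comm]
    linear_combination (norm := module) hpoly
  convert! Submodule.add_mem_sup (Submodule.add_mem_sup hzero hhalf) hone using 1
  module

theorem exists_peirceSpace_linearIndependent (h2 : (2 : k) ≠ 0) (hdim : 1 < Module.finrank k J)
    (he : IsIdempotentElem e) (he0 : e ≠ 0) :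
    ∃ q : k, (q = 0 ∨ q = 2⁻¹ ∨ q = 1) ∧ ∃ b ∈ peirceSpace e q, LinearIndependent k ![e, b] := by
  by_contra! hdep
  have hle (q : k) (hq : q = 0 ∨ q = 2⁻¹ ∨ q = 1) : peirceSpace e q ≤ Submodule.span k {e} := by
    intro b hb
    have hb' := hdep q hq b hb
    rw [LinearIndependent.pair_iff' he0] at hb'
    push Not at hb'
    exact Submodule.mem_span_singleton.mpr hb'
  have hspan : Submodule.span k {e} = ⊤ := by
    rw [eq_top_iff, ← peirceSpace_zero_sup_half_sup_one_eq_top h2 he]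
    exact sup_le (sup_le (hle 0 (by simp)) (hle 2⁻¹ (by simp))) (hle 1 (by simp))
  have hone : Module.finrank k J = 1 := by
    rw [← finrank_top k J, ← hspan, finrank_span_singleton he0]
  exact hdim.ne' hone

theorem mul_mem_peirceSpace_zero (h2 : (2 : k) ≠ 0) (he : IsIdempotentElem e) {x y : J}
    (hx : x ∈ peirceSpace e (0 : k)) (hy : y ∈ peirceSpace e (0 : k)) :
    x * y ∈ peirceSpace e (0 : k) := by
  rw [mem_peirceSpace, zero_smul] at hx hy ⊢
  simpa [he.eq, hx, hy] using (jordan_identity_linearized h2 e x y).symm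

theorem mul_mul_mul_self_of_mem_peirceSpace [IsScalarTower k J J] (h2 : (2 : k) ≠ 0)
    (he : IsIdempotentElem e) {q : k} {b : J} (hb : b ∈ peirceSpace e q) :
    e * (e * (b * b)) = e * (b * b) := by
  have hbe : b * e = q • b := by rw [mul_comm, mem_peirceSpace.mp hb]
  have hlin := jordan_identity_linearized h2 b e e
  simp only [hbe, he.eq, mul_smul_comm, smul_mul_assoc] at hlin
  rw [mul_comm (b * b) e] at hlin
  exact add_left_cancel hlin

end Peirce

variable [IsScalarTower k J J]

section IdempotentTables

variable {e b c : J}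

theorem isIdempotentElem_inv_smul {a : J} {t : k} (ht : t ≠ 0) (ha : a * a = t • a) :
    IsIdempotentElem (t⁻¹ • a) := by
  rw [IsIdempotentElem, smul_mul_smul_comm, ha, smul_smul, inv_mul_cancel_right₀ ht]

theorem isIdempotentElem_half_smul_add (h2 : (2 : k) ≠ 0) (he : IsIdempotentElem e)
    (hec : e * c = c) (hcc : c * c = e) : IsIdempotentElem ((2⁻¹ : k) • (e + c)) := by
  refine isIdempotentElem_inv_smul h2 ?_
  simp only [mul_add, add_mul, he.eq, hec, mul_comm c e, hcc]
  module

theorem exists_hasNormalTable_of_involution (h2 : (2 : k) ≠ 0) (hind : LinearIndependent k ![e, c])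
    (he : IsIdempotentElem e) (hec : e * c = c) (hcc : c * c = e) :
    ∃ a b : J, LinearIndependent k ![a, b] ∧ HasNormalTable k a b := by
  refine ⟨(2⁻¹ : k) • (e + c), (2⁻¹ : k) • (e + -c), ?_, .inl ⟨?_, ?_, ?_⟩⟩
  · simp only [smul_add, smul_neg, ← neg_smul]
    exact (LinearIndependent.pair_add_smul_add_smul_iff _ _ _ _).mpr ⟨hind, by grind⟩
  · exact isIdempotentElem_half_smul_add h2 he hec hcc
  · exact isIdempotentElem_half_smul_add h2 he (by rw [mul_neg, hec]) (by rw [neg_mul_neg, hcc])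
  · have horth : (e + c) * (e + -c) = 0 := by
      simp only [mul_add, add_mul, mul_neg, he.eq, hec, mul_comm c e, hcc]
      abel
    rw [smul_mul_smul_comm, horth, smul_zero]

theorem exists_mul_self_eq_smul_of_unit (h2 : (2 : k) ≠ 0) (hind : LinearIndependent k ![e, b])
    (he : IsIdempotentElem e) (heb : e * b = b) {r s : k} (hbb : b * b = r • e + s • b) :
    ∃ (c : J) (t : k), LinearIndependent k ![e, c] ∧ e * c = c ∧ c * c = t • e := by
  refine ⟨(-(s / 2)) • e + b, r + (s / 2) ^ 2, ?_, ?_, ?_⟩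
  · exact (LinearIndependent.pair_add_smul_right_iff _).mpr hind
  · rw [mul_add, mul_smul_comm, heb, he.eq]
  · simp only [mul_add, add_mul, mul_smul_comm, smul_mul_assoc, he.eq, heb, mul_comm b e, hbb]
    match_scalars <;> field_simp
    all_goals ring

theorem exists_hasNormalTable_of_unit (h2 : (2 : k) ≠ 0) (hsqrt : ∀ t : k, IsSquare t)
    (hind : LinearIndependent k ![e, b]) (he : IsIdempotentElem e) (heb : e * b = b)
    {r s : k} (hbb : b * b = r • e + s • b) :
    ∃ a b : J, LinearIndependent k ![a, b] ∧ HasNormalTable k a b := by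
  obtain ⟨c, t, hec_ind, hec, hcc⟩ := exists_mul_self_eq_smul_of_unit h2 hind he heb hbb
  obtain rfl | ht := eq_or_ne t 0
  · exact ⟨e, c, hec_ind, .inr <| .inl ⟨he, hec, by rw [hcc, zero_smul]⟩⟩
  obtain ⟨d, rfl⟩ := hsqrt t
  have hd : d ≠ 0 := left_ne_zero_of_mul ht
  have hind' := linearIndependent_pair_smul_right (inv_ne_zero hd) hec_ind
  refine exists_hasNormalTable_of_involution h2 hind' he ?_ ?_
  · rw [mul_smul_comm, hec]
  · rw [smul_mul_smul_comm, hcc, smul_smul, ← mul_inv, inv_mul_cancel₀ ht, one_smul]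

variable [IsCommJordan J] {r s : k}

theorem exists_hasNormalTable_of_mem_peirceSpace_zero (h2 : (2 : k) ≠ 0)
    (hind : LinearIndependent k ![e, b]) (he : IsIdempotentElem e)
    (hb : b ∈ peirceSpace e (0 : k)) (hbb : b * b = r • e + s • b) :
    ∃ a b : J, LinearIndependent k ![a, b] ∧ HasNormalTable k a b := by
  have heb : e * b = 0 := by rw [mem_peirceSpace.mp hb, zero_smul]
  have hr : r = 0 := by
    have hebb := mul_mem_peirceSpace_zero h2 he hb hb
    rw [mem_peirceSpace, zero_smul, hbb, mul_add, mul_smul_comm, mul_smul_comm, he.eq, heb,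
      smul_zero, add_zero] at hebb
    exact (smul_eq_zero.mp hebb).resolve_right (hind.ne_zero 0)
  rw [hr, zero_smul, zero_add] at hbb
  obtain rfl | hs := eq_or_ne s 0
  · exact ⟨e, b, hind, .inr <| .inr <| .inr <| .inr <| .inl ⟨he, heb, by rw [hbb, zero_smul]⟩⟩
  · refine ⟨e, s⁻¹ • b, linearIndependent_pair_smul_right (inv_ne_zero hs) hind,
      .inl ⟨he, isIdempotentElem_inv_smul hs hbb, ?_⟩⟩
    rw [mul_smul_comm, heb, smul_zero]

theorem mul_self_eq_zero_of_mem_peirceSpace_half (h2 : (2 : k) ≠ 0)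
    (hind : LinearIndependent k ![e, b]) (he : IsIdempotentElem e)
    (hb : b ∈ peirceSpace e (2⁻¹ : k)) (hbb : b * b = r • e + s • b) : b * b = 0 := by
  have heb := mem_peirceSpace.mp hb
  have hcancel (t : k) (ht : (t * (2⁻¹ * 2⁻¹)) • b = (t * 2⁻¹) • b) : t = 0 := by
    have hcoeff := smul_left_injective k (hind.ne_zero 1) ht
    field_simp at hcoeff
    linear_combination -hcoeff
  have hs : s = 0 := by
    have hproj := mul_mul_mul_self_of_mem_peirceSpace h2 he hb
    simp only [hbb, mul_add, mul_smul_comm, he.eq, heb, add_right_inj, smul_smul,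
      mul_assoc] at hproj
    exact hcancel s hproj
  rw [hs, zero_smul, add_zero] at hbb
  have hr : r = 0 := by
    have hjordan := IsCommJordan.lmul_comm_rmul_rmul b e
    simp only [hbb, mul_comm b e, mul_smul_comm, smul_mul_assoc, he.eq, heb, smul_smul] at hjordan
    exact hcancel r hjordan
  rw [hbb, hr, zero_smul]

theorem exists_hasNormalTable_of_isIdempotentElem (h2 : (2 : k) ≠ 0)
    (hsqrt : ∀ t : k, IsSquare t) (hdim : Module.finrank k J = 2) (he : IsIdempotentElem e)
    (he0 : e ≠ 0) : ∃ a b : J, LinearIndependent k ![a, b] ∧ HasNormalTable k a b := by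
  obtain ⟨q, hq, b, hb, hind⟩ := exists_peirceSpace_linearIndependent h2 (by omega) he he0
  obtain ⟨r, s, hbb⟩ := exists_eq_smul_add_smul_of_finrank_eq_two hdim hind (b * b)
  obtain rfl | rfl | rfl := hq
  · exact exists_hasNormalTable_of_mem_peirceSpace_zero h2 hind he hb hbb
  · have hbb0 := mul_self_eq_zero_of_mem_peirceSpace_half h2 hind he hb hbb
    exact ⟨e, b, hind, .inr <| .inr <| .inl ⟨he, mem_peirceSpace.mp hb, hbb0⟩⟩
  · have heb : e * b = b := by rw [mem_peirceSpace.mp hb, one_smul]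
    exact exists_hasNormalTable_of_unit h2 hsqrt hind he heb hbb

end IdempotentTables

section NoIdempotent

variable {a : J}

theorem linearIndependent_pair_mul_self (hno : ∀ e : J, IsIdempotentElem e → e = 0)
    (ha : a * a ≠ 0) : LinearIndependent k ![a, a * a] := by
  have ha0 : a ≠ 0 := left_ne_zero_of_mul ha
  refine (LinearIndependent.pair_iff' ha0).mpr fun c hc ↦ ?_
  have hc0 : c ≠ 0 := by
    rintro rfl
    exact ha (by rw [← hc, zero_smul])
  exact smul_ne_zero (inv_ne_zero hc0) ha0 (hno _ (isIdempotentElem_inv_smul hc0 hc.symm))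

variable [IsCommJordan J] {p q : k}

-- The witness is `1 = p⁻¹ (X ^ 2 - q X)` in `k[X] / (X ^ 2 - q X - p)`, evaluated at `a`.
theorem isIdempotentElem_of_cube_eq (hp : p ≠ 0) (hcube : a * (a * a) = p • a + q • (a * a)) :
    IsIdempotentElem (p⁻¹ • (a * a - q • a)) := by
  refine isIdempotentElem_inv_smul hp ?_
  simp only [mul_sub, sub_mul, mul_add, mul_smul_comm, smul_mul_assoc, mul_comm (a * a) a,
    mul_self_mul_mul_self, hcube]
  module

theorem mul_mul_self_eq_zero_of_cube_eq (hno : ∀ e : J, IsIdempotentElem e → e = 0)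
    (hind : LinearIndependent k ![a, a * a]) (hcube : a * (a * a) = p • a + q • (a * a)) :
    a * (a * a) = 0 := by
  have hp : p = 0 := by
    by_contra hp
    have hunit := hno _ (isIdempotentElem_of_cube_eq hp hcube)
    have hdep : (-q) • a + (1 : k) • (a * a) = 0 := by
      linear_combination (norm := module) (smul_eq_zero.mp hunit).resolve_left (inv_ne_zero hp)
    exact one_ne_zero (LinearIndependent.pair_iff.mp hind _ _ hdep).2
  rw [hp, zero_smul, zero_add] at hcube
  have hq : q = 0 := by
    by_contra hq
    have hsq : a * a * (a * a) = (q * q) • (a * a) := by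
      rw [mul_self_mul_mul_self, hcube, mul_smul_comm, hcube, smul_smul]
    have hqq : q * q ≠ 0 := mul_ne_zero hq hq
    exact smul_ne_zero (inv_ne_zero hqq) (hind.ne_zero 1)
      (hno _ (isIdempotentElem_inv_smul hqq hsq))
  rw [hcube, hq, zero_smul]

theorem exists_hasNormalTable_of_forall_isIdempotentElem_eq_zero (h2 : (2 : k) ≠ 0)
    (hdim : Module.finrank k J = 2) (hno : ∀ e : J, IsIdempotentElem e → e = 0) :
    ∃ a b : J, LinearIndependent k ![a, b] ∧ HasNormalTable k a b := by
  by_cases hsq : ∀ x : J, x * x = 0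
  · have hzero := mul_eq_zero_of_forall_mul_self_eq_zero h2 hsq
    have : Nontrivial J := Module.nontrivial_of_finrank_pos (R := k) (by omega)
    obtain ⟨a, ha⟩ := exists_ne (0 : J)
    obtain ⟨b, hind⟩ := exists_linearIndependent_pair_of_one_lt_finrank (R := k) (by omega) ha
    exact ⟨a, b, hind, by simp [HasNormalTable, hzero]⟩
  · push Not at hsq
    obtain ⟨a, ha⟩ := hsq
    have hind : LinearIndependent k ![a, a * a] := linearIndependent_pair_mul_self hno ha
    obtain ⟨p, q, hpq⟩ := exists_eq_smul_add_smul_of_finrank_eq_two hdim hind (a * (a * a))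
    have hcube := mul_mul_self_eq_zero_of_cube_eq hno hind hpq
    have hfourth : a * a * (a * a) = 0 := by rw [mul_self_mul_mul_self, hcube, mul_zero]
    exact ⟨a, a * a, hind, .inr <| .inr <| .inr <| .inl ⟨rfl, hcube, hfourth⟩⟩

end NoIdempotent

theorem two_dimensional_jordan_classification_general [IsCommJordan J] (h2 : (2 : k) ≠ 0)
    (hsqrt : ∀ t : k, IsSquare t) (hdim : Module.finrank k J = 2) :
    ∃ a b : J, LinearIndependent k ![a, b] ∧ Submodule.span k {a, b} = ⊤ ∧
      HasNormalTable k a b := by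
  obtain ⟨a, b, hind, htable⟩ :
      ∃ a b : J, LinearIndependent k ![a, b] ∧ HasNormalTable k a b := by
    by_cases hno : ∀ e : J, IsIdempotentElem e → e = 0
    · exact exists_hasNormalTable_of_forall_isIdempotentElem_eq_zero h2 hdim hno
    · push Not at hno
      obtain ⟨e, he, he0⟩ := hno
      exact exists_hasNormalTable_of_isIdempotentElem h2 hsqrt hdim he he0
  exact ⟨a, b, hind, span_pair_eq_top_of_finrank_eq_two hdim hind, htable⟩

end JordanAlgebra

/-- Let `k` be an algebraically closed field of characteristic ≠ 2 and `J` a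
two-dimensional Jordan algebra over `k`. Then `J` has a basis `{a, b}` whose
multiplication table is one of the following six:
(i) `a² = a, b² = b, a·b = 0`; (ii) `a² = a, a·b = b, b² = 0`;
(iii) `a² = a, a·b = (1/2)b, b² = 0`; (iv) `a² = b, a·b = 0, b² = 0`;
(v) `a² = a, a·b = 0, b² = 0`; (vi) `a² = b² = a·b = 0`. -/
theorem two_dimensional_jordan_classification
    {k : Type*} [Field k] [IsAlgClosed k] (hchar : (2 : k) ≠ 0)
    {J : Type*} [NonUnitalNonAssocCommRing J] [Module k J]
    [SMulCommClass k J J] [IsScalarTower k J J]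
    (hJordan : ∀ x y : J, ((x * x) * y) * x = (x * x) * (y * x))
    (hdim : Module.finrank k J = 2) :
    ∃ a b : J, LinearIndependent k ![a, b] ∧ Submodule.span k {a, b} = ⊤ ∧
      ((a * a = a ∧ b * b = b ∧ a * b = 0) ∨
       (a * a = a ∧ a * b = b ∧ b * b = 0) ∨
       (a * a = a ∧ a * b = (2⁻¹ : k) • b ∧ b * b = 0) ∨
       (a * a = b ∧ a * b = 0 ∧ b * b = 0) ∨
       (a * a = a ∧ a * b = 0 ∧ b * b = 0) ∨
       (a * a = 0 ∧ b * b = 0 ∧ a * b = 0)) := by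
  have : IsCommJordan J := ⟨fun a b ↦ by
    rw [mul_comm (a * b), mul_comm a b, ← hJordan, mul_comm (a * a * b), mul_comm (a * a)]⟩
  exact two_dimensional_jordan_classification_general hchar IsAlgClosed.exists_eq_mul_self hdim
end
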